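/- Positive levels are generated by level one: let A be a generalized Cartan matrix of size k, fix an index i₀, let D be the level derivation of g(A) with respect to i₀ and g_l its eigenspace with eigenvalue l. Then the Lie subalgebra of g(A) generated by g_1 contains g_l for every integer l ≥ 1; equivalently, that subalgebra equals the sum ⨁_{l≥1} g_l. -/

import Mathlib

noncomputable section

open CartanMatrix

/-- A generalized Cartan matrix: `A i i = 2`, off-diagonal entries are non-positive, and
`A i j = 0 ↔ A j i = 0`. -/
def IsGCM {B : Type*} (A : Matrix B B ℤ) : Prop :=
  (∀ i, A i i = 2) ∧ (∀ i j, i ≠ j → A i j ≤ 0) ∧ (∀ i j, A i j = 0 ↔ A j i = 0)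

/-- The images in the Kac–Moody algebra `Matrix.ToLieAlgebra ℚ A` of the generators of the
free Lie algebra. -/
def KMgen {B : Type*} [DecidableEq B] (A : Matrix B B ℤ) (x : Generators B) :
    Matrix.ToLieAlgebra ℚ A :=
  LieSubmodule.Quotient.mk (N := Relations.toIdeal ℚ A) (FreeLieAlgebra.of ℚ x)

/-- The Cartan generator `h i`. -/
def gH {B : Type*} [DecidableEq B] (A : Matrix B B ℤ) (i : B) : Matrix.ToLieAlgebra ℚ A :=
  KMgen A (Generators.H i)

/-- The raising generator `e i`. -/
def gE {B : Type*} [DecidableEq B] (A : Matrix B B ℤ) (i : B) : Matrix.ToLieAlgebra ℚ A :=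
  KMgen A (Generators.E i)

/-- The lowering generator `f i`. -/
def gF {B : Type*} [DecidableEq B] (A : Matrix B B ℤ) (i : B) : Matrix.ToLieAlgebra ℚ A :=
  KMgen A (Generators.F i)

/-!
Let `g c` be the `c`-eigenspace of a derivation `D` of `L`, and `S c` the subalgebra it generates.
Since `g 0` normalizes `S c`, the bracket `⁅g (-c), S c⁆` stays in `g 0 ⊔ S c`; so
`S c ⊔ g 0 ⊔ S (-c)` is stable under `ad` of `g c`, `g 0` and `g (-c)`, and is all of `L` as soon
as these three eigenspaces generate `L`. For `c = 1` this is a triangular decomposition: `S 1` lies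
in the sum of the positive levels, `g 0 ⊔ S (-1)` in the sum of the nonpositive ones, and these two
sums are independent, so the first inclusion is an equality.
-/

section LieSpan

variable {R L M : Type*} [CommRing R] [LieRing L] [LieAlgebra R L] {s : Set L}

theorem lie_mem_of_mem_lieSpan [AddCommGroup M] [Module R M] [LieRingModule L M] [LieModule R L M]
    {N : Submodule R M} (hs : ∀ x ∈ s, ∀ m ∈ N, ⁅x, m⁆ ∈ N) {x : L}
    (hx : x ∈ LieSubalgebra.lieSpan R L s) : ∀ m ∈ N, ⁅x, m⁆ ∈ N := by
  induction hx using LieSubalgebra.lieSpan_induction with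
  | mem x hx => exact hs x hx
  | zero => intro m _; rw [zero_lie]; exact zero_mem N
  | smul r x _ ih => intro m hm; rw [smul_lie]; exact N.smul_mem r (ih m hm)
  | add x y _ _ ihx ihy => intro m hm; rw [add_lie]; exact add_mem (ihx m hm) (ihy m hm)
  | lie x y _ _ ihx ihy =>
    intro m hm
    rw [lie_lie]
    exact sub_mem (ihx _ (ihy m hm)) (ihy _ (ihx m hm))

theorem eq_top_of_lieSpan_eq_top (hs : LieSubalgebra.lieSpan R L s = ⊤) {N : Submodule R L}
    (hsN : s ⊆ N) (hlie : ∀ x ∈ s, ∀ y ∈ N, ⁅x, y⁆ ∈ N) : N = ⊤ := by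
  have lie_mem (x : L) : ∀ y ∈ N, ⁅x, y⁆ ∈ N :=
    lie_mem_of_mem_lieSpan hlie (hs ▸ LieSubalgebra.mem_top x)
  let K : LieSubalgebra R L := { N with lie_mem' := fun {x y} _ hy => lie_mem x y hy }
  have hK : K = ⊤ := top_le_iff.1 (hs ▸ LieSubalgebra.lieSpan_le.2 hsN)
  exact congrArg LieSubalgebra.toSubmodule hK

theorem derivation_mem_of_mem_lieSpan (δ : LieDerivation R L L) {N : Submodule R L}
    (le_N : (LieSubalgebra.lieSpan R L s).toSubmodule ≤ N)
    (N_le : N ≤ (LieSubalgebra.lieSpan R L s).normalizer.toSubmodule)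
    (hs : ∀ y ∈ s, δ y ∈ N) {y : L} (hy : y ∈ LieSubalgebra.lieSpan R L s) : δ y ∈ N := by
  induction hy using LieSubalgebra.lieSpan_induction with
  | mem y hy => exact hs y hy
  | zero => rw [map_zero]; exact zero_mem N
  | smul r y _ ih => rw [map_smul]; exact N.smul_mem r ih
  | add y z _ _ ihy ihz => rw [map_add]; exact add_mem ihy ihz
  | lie y z hy hz ihy ihz =>
    rw [LieDerivation.apply_lie_eq_sub]
    exact sub_mem (le_N ((LieSubalgebra.mem_normalizer_iff' _ _).1 (N_le ihz) y hy))
      (le_N ((LieSubalgebra.mem_normalizer_iff' _ _).1 (N_le ihy) z hz))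

theorem lie_mem_of_le_normalizer_lieSpan {x : L} {N : Submodule R L}
    (le_N : (LieSubalgebra.lieSpan R L s).toSubmodule ≤ N)
    (N_le : N ≤ (LieSubalgebra.lieSpan R L s).normalizer.toSubmodule)
    (hs : ∀ y ∈ s, ⁅x, y⁆ ∈ N) {y : L} (hy : y ∈ LieSubalgebra.lieSpan R L s) : ⁅x, y⁆ ∈ N := by
  rw [← LieDerivation.ad_apply_apply (R := R)]
  refine derivation_mem_of_mem_lieSpan _ le_N N_le (fun z hz => ?_) hy
  rw [LieDerivation.ad_apply_apply]
  exact hs z hz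

theorem lieSpan_range_freeLieAlgebra_of (X : Type*) :
    LieSubalgebra.lieSpan R (FreeLieAlgebra R X) (Set.range (FreeLieAlgebra.of R)) = ⊤ := by
  let K := LieSubalgebra.lieSpan R (FreeLieAlgebra R X) (Set.range (FreeLieAlgebra.of R))
  let retraction : FreeLieAlgebra R X →ₗ⁅R⁆ K :=
    FreeLieAlgebra.lift R fun x => ⟨FreeLieAlgebra.of R x, LieSubalgebra.subset_lieSpan ⟨x, rfl⟩⟩
  have incl_retraction : K.incl.comp retraction = LieHom.id := by
    ext x
    simp only [LieHom.comp_apply, retraction, FreeLieAlgebra.lift_of_apply, LieSubalgebra.coe_incl,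
      LieHom.id_apply]
  refine top_le_iff.1 fun x _ => ?_
  rw [← LieHom.id_apply (R := R) x, ← incl_retraction]
  exact (retraction x).2

end LieSpan

section Levels

variable {R L : Type*} [CommRing R] [LieRing L] [LieAlgebra R L] (D : LieDerivation R L L)

/-- The level `g_c` of a derivation `D`: its eigenspace with eigenvalue `c`. -/
abbrev level (c : R) : Submodule R L :=
  Module.End.eigenspace D.toLinearMap c

/-- The Lie subalgebra generated by the level `g_c`. -/
def levelSubalgebra (c : R) : LieSubalgebra R L :=
  LieSubalgebra.lieSpan R L (level D c : Set L)

/-- The local part `g_{-c} + g_0 + g_c` of `L`; for `c = 1` this is Kac's local part of a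
`ℤ`-graded Lie algebra. -/
def localPart (c : R) : Submodule R L :=
  level D (-c) ⊔ level D 0 ⊔ level D c

/-- The (underlying submodule of the) parabolic subalgebra spanned by `g_0` and the subalgebra
generated by `g_c`; the parameters `c` and `-c` give the two opposite parabolics. -/
def parabolic (c : R) : Submodule R L :=
  level D 0 ⊔ (levelSubalgebra D c).toSubmodule

variable {D} {a b c : R} {x y : L}

theorem mem_level : x ∈ level D c ↔ D x = c • x :=
  Module.End.mem_eigenspace_iff

theorem lie_mem_level_add (hx : x ∈ level D a) (hy : y ∈ level D b) : ⁅x, y⁆ ∈ level D (a + b) := by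
  rw [mem_level] at *
  rw [LieDerivation.apply_lie_eq_add, hx, hy, lie_smul, smul_lie, ← add_smul, add_comm]

theorem level_le_levelSubalgebra (c : R) : level D c ≤ (levelSubalgebra D c).toSubmodule :=
  LieSubalgebra.subset_lieSpan

theorem level_zero_le_parabolic (c : R) : level D 0 ≤ parabolic D c :=
  le_sup_left

theorem levelSubalgebra_le_parabolic (c : R) : (levelSubalgebra D c).toSubmodule ≤ parabolic D c :=
  le_sup_right

theorem level_le_parabolic (c : R) : level D c ≤ parabolic D c :=
  (level_le_levelSubalgebra c).trans (levelSubalgebra_le_parabolic c)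

theorem lie_mem_level_of_mem_level_zero (hx : x ∈ level D 0) (hy : y ∈ level D c) :
    ⁅x, y⁆ ∈ level D c :=
  zero_add c ▸ lie_mem_level_add hx hy

theorem lie_mem_level_zero_of_mem_level_neg (hx : x ∈ level D (-c)) (hy : y ∈ level D c) :
    ⁅x, y⁆ ∈ level D 0 :=
  neg_add_cancel c ▸ lie_mem_level_add hx hy

theorem level_zero_le_normalizer (c : R) :
    level D 0 ≤ (levelSubalgebra D c).normalizer.toSubmodule := fun x hx =>
  (LieSubalgebra.mem_normalizer_iff _ x).2 fun _ hy =>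
    lie_mem_of_le_normalizer_lieSpan le_rfl (LieSubalgebra.le_normalizer _)
      (fun _ hz => level_le_levelSubalgebra c (lie_mem_level_of_mem_level_zero hx hz)) hy

theorem parabolic_le_normalizer (c : R) :
    parabolic D c ≤ (levelSubalgebra D c).normalizer.toSubmodule :=
  sup_le (level_zero_le_normalizer c) (LieSubalgebra.le_normalizer _)

theorem lie_mem_parabolic_of_mem_level_neg (hx : x ∈ level D (-c)) (hy : y ∈ levelSubalgebra D c) :
    ⁅x, y⁆ ∈ parabolic D c :=
  lie_mem_of_le_normalizer_lieSpan (levelSubalgebra_le_parabolic c) (parabolic_le_normalizer c)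
    (fun _ hz => level_zero_le_parabolic c (lie_mem_level_zero_of_mem_level_neg hx hz)) hy

theorem localPart_neg (c : R) : localPart D (-c) = localPart D c := by
  rw [localPart, localPart, neg_neg, sup_right_comm, sup_comm (level D c), sup_right_comm]

theorem localPart_le_parabolic_sup (c : R) : localPart D c ≤ parabolic D c ⊔ parabolic D (-c) :=
  sup_le (sup_le ((level_le_parabolic _).trans le_sup_right)
    ((level_zero_le_parabolic _).trans le_sup_left)) ((level_le_parabolic _).trans le_sup_left)

theorem lie_mem_localPart_of_mem_level_zero (hx : x ∈ level D 0) (hy : y ∈ localPart D c) :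
    ⁅x, y⁆ ∈ localPart D c := by
  obtain ⟨w, hw, u, hu, rfl⟩ := Submodule.mem_sup.1 hy
  obtain ⟨v, hv, z, hz, rfl⟩ := Submodule.mem_sup.1 hw
  rw [lie_add, lie_add]
  exact Submodule.add_mem_sup (Submodule.add_mem_sup (lie_mem_level_of_mem_level_zero hx hv)
    (lie_mem_level_of_mem_level_zero hx hz)) (lie_mem_level_of_mem_level_zero hx hu)

theorem lie_mem_parabolic_of_mem_localPart (hx : x ∈ localPart D c)
    (hy : y ∈ levelSubalgebra D c) : ⁅x, y⁆ ∈ parabolic D c := by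
  obtain ⟨w, hw, u, hu, rfl⟩ := Submodule.mem_sup.1 hx
  obtain ⟨v, hv, z, hz, rfl⟩ := Submodule.mem_sup.1 hw
  have normalizes {t : L} (ht : t ∈ parabolic D c) : ⁅t, y⁆ ∈ parabolic D c :=
    levelSubalgebra_le_parabolic c
      ((LieSubalgebra.mem_normalizer_iff _ t).1 (parabolic_le_normalizer c ht) y hy)
  rw [add_lie, add_lie]
  exact add_mem (add_mem (lie_mem_parabolic_of_mem_level_neg hv hy)
    (normalizes (level_zero_le_parabolic c hz))) (normalizes (level_le_parabolic c hu))

theorem lie_mem_parabolic_sup (hx : x ∈ localPart D c) (hy : y ∈ parabolic D c) :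
    ⁅x, y⁆ ∈ parabolic D c ⊔ parabolic D (-c) := by
  obtain ⟨z, hz, u, hu, rfl⟩ := Submodule.mem_sup.1 hy
  rw [lie_add, ← lie_skew x z]
  exact add_mem
    (localPart_le_parabolic_sup c (neg_mem (lie_mem_localPart_of_mem_level_zero hz hx)))
    (Submodule.mem_sup_left (lie_mem_parabolic_of_mem_localPart hx hu))

theorem parabolic_sup_parabolic_neg_eq_top
    (hD : LieSubalgebra.lieSpan R L (localPart D c : Set L) = ⊤) :
    parabolic D c ⊔ parabolic D (-c) = ⊤ := by
  refine eq_top_of_lieSpan_eq_top hD (localPart_le_parabolic_sup c) fun x hx y hy => ?_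
  obtain ⟨u, hu, v, hv, rfl⟩ := Submodule.mem_sup.1 hy
  rw [lie_add]
  refine add_mem (lie_mem_parabolic_sup hx hu) ?_
  have opposite : ⁅x, v⁆ ∈ parabolic D (-c) ⊔ parabolic D (- -c) :=
    lie_mem_parabolic_sup (by rwa [localPart_neg]) hv
  rwa [neg_neg, sup_comm] at opposite

theorem levelSubalgebra_sup_parabolic_neg_eq_top
    (hD : LieSubalgebra.lieSpan R L (localPart D c : Set L) = ⊤) :
    (levelSubalgebra D c).toSubmodule ⊔ parabolic D (-c) = ⊤ := by
  refine top_le_iff.1 ((parabolic_sup_parabolic_neg_eq_top hD).ge.trans ?_)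
  exact sup_le (sup_le ((level_zero_le_parabolic _).trans le_sup_right) le_sup_left) le_sup_right

variable (D) in
/-- The sum of the integral levels `g_l` with `l ∈ S`. The set `S` of integers is closed under
addition, which makes the sum a Lie subalgebra. -/
def levelSum (S : AddSubsemigroup ℤ) : LieSubalgebra R L where
  toSubmodule := ⨆ l : S, level D ((l : ℤ) : R)
  lie_mem' {x y} hx hy := by
    let bracket : L →ₗ[R] L →ₗ[R] L := LieModule.toEnd R L L
    suffices h : Submodule.map₂ bracket (⨆ l : S, level D ((l : ℤ) : R))
        (⨆ l : S, level D ((l : ℤ) : R)) ≤ ⨆ l : S, level D ((l : ℤ) : R) from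
      h (Submodule.apply_mem_map₂ bracket hx hy)
    simp only [Submodule.map₂_iSup_left, Submodule.map₂_iSup_right, iSup_le_iff, Submodule.map₂_le]
    intro l k u hu v hv
    have hkl : ⁅u, v⁆ ∈ level D ((k + l : ℤ) : R) := by
      rw [Int.cast_add]
      exact lie_mem_level_add hu hv
    exact Submodule.mem_iSup_of_mem (k + l) hkl

theorem level_le_levelSum {S : AddSubsemigroup ℤ} {l : ℤ} (hl : l ∈ S) (hc : (l : R) = c) :
    level D c ≤ (levelSum D S).toSubmodule :=
  hc ▸ le_iSup (fun l : S => level D ((l : ℤ) : R)) ⟨l, hl⟩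

theorem levelSubalgebra_le_levelSum {S : AddSubsemigroup ℤ} {l : ℤ} (hl : l ∈ S)
    (hc : (l : R) = c) : levelSubalgebra D c ≤ levelSum D S :=
  LieSubalgebra.lieSpan_le.2 (level_le_levelSum hl hc)

theorem parabolic_le_levelSum {S : AddSubsemigroup ℤ} {l : ℤ} (h0 : 0 ∈ S) (hl : l ∈ S)
    (hc : (l : R) = c) : parabolic D c ≤ (levelSum D S).toSubmodule :=
  sup_le (level_le_levelSum h0 Int.cast_zero) (levelSubalgebra_le_levelSum hl hc)

theorem disjoint_levelSum [IsDomain R] [CharZero R] [Module.IsTorsionFree R L]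
    {S T : AddSubsemigroup ℤ} (hST : Disjoint (S : Set ℤ) T) :
    Disjoint (levelSum D S).toSubmodule (levelSum D T).toSubmodule := by
  have independent : iSupIndep fun l : ℤ => level D (l : R) :=
    (Module.End.eigenspaces_iSupIndep D.toLinearMap).comp Int.cast_injective
  have disjoint := independent.disjoint_biSup_biSup hST
  rwa [← iSup_subtype'', ← iSup_subtype''] at disjoint

/-- The levels `l ≥ 1`, as an index set for `levelSum`. -/
def positiveLevels : AddSubsemigroup ℤ where
  carrier := {l | 1 ≤ l}
  add_mem' {k l} hk hl := by rw [Set.mem_ofPred_eq] at *; omega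

/-- The levels `l ≤ 0`, as an index set for `levelSum`. -/
def nonpositiveLevels : AddSubsemigroup ℤ where
  carrier := {l | l ≤ 0}
  add_mem' {k l} hk hl := by rw [Set.mem_ofPred_eq] at *; omega

theorem mem_positiveLevels {l : ℤ} : l ∈ positiveLevels ↔ 1 ≤ l :=
  Iff.rfl

theorem mem_nonpositiveLevels {l : ℤ} : l ∈ nonpositiveLevels ↔ l ≤ 0 :=
  Iff.rfl

theorem disjoint_positiveLevels_nonpositiveLevels :
    Disjoint (positiveLevels : Set ℤ) nonpositiveLevels := by
  refine Set.disjoint_left.2 fun l hpos hnonpos => ?_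
  rw [SetLike.mem_coe, mem_positiveLevels] at hpos
  rw [SetLike.mem_coe, mem_nonpositiveLevels] at hnonpos
  omega

variable [IsDomain R] [CharZero R] [Module.IsTorsionFree R L]

theorem levelSubalgebra_one_eq_levelSum
    (hD : LieSubalgebra.lieSpan R L (localPart D 1 : Set L) = ⊤) :
    (levelSubalgebra D 1).toSubmodule = (levelSum D positiveLevels).toSubmodule := by
  have le : levelSubalgebra D 1 ≤ levelSum D positiveLevels :=
    levelSubalgebra_le_levelSum (mem_positiveLevels.2 le_rfl) Int.cast_one
  have parabolic_le : parabolic D (-1) ≤ (levelSum D nonpositiveLevels).toSubmodule :=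
    parabolic_le_levelSum (l := -1) (mem_nonpositiveLevels.2 le_rfl)
      (mem_nonpositiveLevels.2 (by decide)) (by rw [Int.cast_neg, Int.cast_one])
  have disjoint : Disjoint (levelSum D positiveLevels).toSubmodule (parabolic D (-1)) :=
    (disjoint_levelSum disjoint_positiveLevels_nonpositiveLevels).mono_right parabolic_le
  refine eq_of_le_of_inf_le_of_le_sup le (disjoint.le_bot.trans bot_le) ?_
  exact le_top.trans (levelSubalgebra_sup_parabolic_neg_eq_top hD).ge

theorem positive_levels_generated_general
    (hD : LieSubalgebra.lieSpan R L (localPart D 1 : Set L) = ⊤) :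
    (∀ l : ℤ, 1 ≤ l → level D (l : R) ≤ (levelSubalgebra D 1).toSubmodule) ∧
      (levelSubalgebra D 1).toSubmodule = ⨆ l : {l : ℤ // 1 ≤ l}, level D ((l : ℤ) : R) := by
  have eq_levelSum := levelSubalgebra_one_eq_levelSum hD
  exact ⟨fun l hl => eq_levelSum ▸ level_le_levelSum (mem_positiveLevels.2 hl) rfl, eq_levelSum⟩

end Levels

section KacMoody

variable {B : Type*} [DecidableEq B] (A : Matrix B B ℤ)

/-- The quotient map from the free Lie algebra on the Chevalley generators to the Kac–Moody
algebra, as a homomorphism of Lie algebras. -/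
def toKacMoody : FreeLieAlgebra ℚ (Generators B) →ₗ⁅ℚ⁆ Matrix.ToLieAlgebra ℚ A where
  toFun := LieSubmodule.Quotient.mk (N := Relations.toIdeal ℚ A)
  map_add' _ _ := rfl
  map_smul' _ _ := rfl
  map_lie' := rfl

theorem toKacMoody_surjective : Function.Surjective (toKacMoody A) :=
  LieSubmodule.Quotient.surjective_mk' (Relations.toIdeal ℚ A)

theorem lieSpan_range_KMgen :
    LieSubalgebra.lieSpan ℚ (Matrix.ToLieAlgebra ℚ A) (Set.range (KMgen A)) = ⊤ := by
  have range_KMgen : Set.range (KMgen A) = toKacMoody A '' Set.range (FreeLieAlgebra.of ℚ) :=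
    Set.range_comp (toKacMoody A) (FreeLieAlgebra.of ℚ)
  rw [range_KMgen, ← LieSubalgebra.map_lieSpan, lieSpan_range_freeLieAlgebra_of,
    ← LieHom.range_eq_map, LieHom.range_eq_top]
  exact toKacMoody_surjective A

variable {A} {D : LieDerivation ℚ (Matrix.ToLieAlgebra ℚ A) (Matrix.ToLieAlgebra ℚ A)}

theorem KMgen_mem_localPart {p : B → Prop} [DecidablePred p]
    (hDe : ∀ i, D (gE A i) = if p i then gE A i else 0)
    (hDf : ∀ i, D (gF A i) = if p i then -gF A i else 0)
    (hDh : ∀ i, D (gH A i) = 0) (x : Generators B) : KMgen A x ∈ localPart D 1 := by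
  have level_zero_le : level D 0 ≤ localPart D 1 := le_sup_right.trans le_sup_left
  have level_neg_one_le : level D (-1) ≤ localPart D 1 := le_sup_left.trans le_sup_left
  cases x with
  | H i => exact level_zero_le (mem_level.2 ((hDh i).trans (zero_smul ℚ _).symm))
  | E i =>
    by_cases hi : p i
    · exact Submodule.mem_sup_right
        (mem_level.2 (((hDe i).trans (if_pos hi)).trans (one_smul ℚ _).symm))
    · exact level_zero_le (mem_level.2 (((hDe i).trans (if_neg hi)).trans (zero_smul ℚ _).symm))
  | F i =>
    by_cases hi : p i
    · exact level_neg_one_le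
        (mem_level.2 (((hDf i).trans (if_pos hi)).trans (neg_one_smul ℚ _).symm))
    · exact level_zero_le (mem_level.2 (((hDf i).trans (if_neg hi)).trans (zero_smul ℚ _).symm))

theorem lieSpan_localPart_eq_top (h : ∀ x, KMgen A x ∈ localPart D 1) :
    LieSubalgebra.lieSpan ℚ (Matrix.ToLieAlgebra ℚ A)
      (localPart D 1 : Set (Matrix.ToLieAlgebra ℚ A)) = ⊤ :=
  top_le_iff.1 ((lieSpan_range_KMgen A).ge.trans
    (LieSubalgebra.lieSpan_mono (Set.range_subset_iff.2 h)))

end KacMoody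

/-- **Positive levels are generated by level one.** Let `A` be a GCM, `i₀` an index and `D`
the level derivation with respect to `i₀`, with eigenspaces `g_l`. Then the Lie subalgebra
of `g(A)` generated by `g₁` contains `g_l` for every `l ≥ 1`, and equals `⨆_{l ≥ 1} g_l`. -/
theorem positive_levels_generated {k : ℕ} (A : Matrix (Fin k) (Fin k) ℤ) (hA : IsGCM A)
    (i₀ : Fin k)
    (D : LieDerivation ℚ (Matrix.ToLieAlgebra ℚ A) (Matrix.ToLieAlgebra ℚ A))
    (hDe : ∀ i, D (gE A i) = if i = i₀ then gE A i else 0)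
    (hDf : ∀ i, D (gF A i) = if i = i₀ then -gF A i else 0)
    (hDh : ∀ i, D (gH A i) = 0) :
    (∀ l : ℤ, 1 ≤ l →
      Module.End.eigenspace D.toLinearMap (l : ℚ) ≤
        (LieSubalgebra.lieSpan ℚ (Matrix.ToLieAlgebra ℚ A)
          (Module.End.eigenspace D.toLinearMap 1 : Set (Matrix.ToLieAlgebra ℚ A))).toSubmodule) ∧
    (LieSubalgebra.lieSpan ℚ (Matrix.ToLieAlgebra ℚ A)
        (Module.End.eigenspace D.toLinearMap 1 : Set (Matrix.ToLieAlgebra ℚ A))).toSubmodule =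
      ⨆ l : {l : ℤ // 1 ≤ l}, Module.End.eigenspace D.toLinearMap ((l : ℤ) : ℚ) := by
  exact positive_levels_generated_general
    (lieSpan_localPart_eq_top (KMgen_mem_localPart (p := (· = i₀)) hDe hDf hDh))
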